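/- arXiv:2604.24206 — 2 statements merged into one kernel-verified Lean document; each statement's English description precedes it below -/
import Mathlib

section
/- Let H be a complex Hilbert space, let M be a von Neumann algebra acting on H, and let τ be a tracial state on M (a linear functional with τ(1) = 1, τ(x*x) ≥ 0 for all x ∈ M, and τ(xy) = τ(yx) for all x, y ∈ M). Let 0 < δ ≤ 1/4 and let a, p, c ∈ M be positive contractions satisfying ap = a = pa, pc = p = cp, and ‖p² − p‖_{2,τ} ≤ δ. Then there exists a projection q ∈ M (q = q* = q²) such that aq = a = qa, qc = q = cq, and ‖q − p‖_{2,τ} ≤ 2√δ. -/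
open scoped ComplexOrder

/-- The 2-seminorm `‖x‖_{2,τ} = (τ(x*x))^{1/2}` associated to a positive tracial
linear functional `τ`. -/
noncomputable def norm2 {A : Type*} [NonUnitalRing A] [StarRing A] [Module ℂ A]
    (τ : A →ₗ[ℂ] ℂ) (x : A) : ℝ :=
  Real.sqrt (τ (star x * x)).re


theorem vna_mem_of_commute {H : Type*} [NormedAddCommGroup H] [InnerProductSpace ℂ H]
    [CompleteSpace H] (M : VonNeumannAlgebra H) (x : H →L[ℂ] H)
    (h : ∀ y ∈ M.commutant, Commute x y) : x ∈ M := by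
  rw [← VonNeumannAlgebra.commutant_commutant M, VonNeumannAlgebra.mem_commutant_iff]
  intro y hy
  exact (h y hy).symm.eq

theorem commute_of_mem_commutant {H : Type*} [NormedAddCommGroup H] [InnerProductSpace ℂ H]
    [CompleteSpace H] {M : VonNeumannAlgebra H} {x y : H →L[ℂ] H}
    (hx : x ∈ M) (hy : y ∈ M.commutant) : Commute x y :=
  VonNeumannAlgebra.mem_commutant_iff.1 hy x hx

theorem eq_zero_of_mul_add_self {H : Type*} [NormedAddCommGroup H] [InnerProductSpace ℂ H]
    [CompleteSpace H] (y d : H →L[ℂ] H) (hd : 0 ≤ d) (h : y * d + y = 0) : y = 0 := by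
  have hu : IsUnit (d + 1) :=
    CStarAlgebra.isUnit_of_le 1 (le_add_of_nonneg_left hd)
  have h2 : y * (d + 1) = 0 := by rw [mul_add, mul_one, h]
  exact (hu.mul_left_eq_zero).1 h2

theorem exists_support_projection {H : Type*} [NormedAddCommGroup H] [InnerProductSpace ℂ H]
    [CompleteSpace H] (M : VonNeumannAlgebra H) (b : H →L[ℂ] H) (hb : b ∈ M)
    (hbs : star b = b) :
    ∃ q ∈ M, star q = q ∧ q * q = q ∧ b * q = b ∧ q * b = b ∧
      (∀ x : H →L[ℂ] H, b * x = 0 → q * x = 0) := by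
  have hcl : IsClosed (b.ker : Set H) := b.isClosed_ker
  have : CompleteSpace b.ker := hcl.completeSpace_coe
  have he : IsStarProjection (b.ker).starProjection := isStarProjection_starProjection
  have hmem : (b.ker).starProjection ∈ M := by
    rw [VonNeumannAlgebra.IsStarProjection.mem_iff he]
    intro y hy x hx
    rw [Submodule.range_starProjection] at hx ⊢
    have hc := commute_of_mem_commutant hb hy
    have h1 : b (y x) = y (b x) := congrArg (fun T : H →L[ℂ] H => T x) hc.eq
    have hx' : b x = 0 := hx
    change b (y x) = 0
    rw [h1, hx', map_zero]
  have hbe : b * (b.ker).starProjection = 0 := by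
    ext x
    exact (Submodule.starProjection_apply_mem b.ker x)
  have hbq : b * (1 - (b.ker).starProjection) = b := by
    rw [mul_sub, hbe, mul_one, sub_zero]
  have hs : star (1 - (b.ker).starProjection) = 1 - (b.ker).starProjection := by
    rw [star_sub, star_one, he.isSelfAdjoint.star_eq]
  refine ⟨1 - (b.ker).starProjection, sub_mem (one_mem M) hmem, hs,
    he.isIdempotentElem.one_sub.eq, hbq, ?_, ?_⟩
  · have := congrArg star hbq
    rwa [star_mul, hs, hbs] at this
  · intro x hx
    ext v
    have hv : x v ∈ b.ker := congrArg (fun T : H →L[ℂ] H => T v) hx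
    have := Submodule.starProjection_eq_self_iff.2 hv
    simp [this]

theorem exists_spectral_projection {H : Type*} [NormedAddCommGroup H] [InnerProductSpace ℂ H]
    [CompleteSpace H] (M : VonNeumannAlgebra H) (a p c : H →L[ℂ] H) (hp : p ∈ M)
    (ha0 : 0 ≤ a) (hp0 : 0 ≤ p) (hc0 : 0 ≤ c)
    (hap : a * p = a) (hcp : c * p = p) :
    ∃ q ∈ M, star q = q ∧ q * q = q ∧ a * q = a ∧ q * a = a ∧ q * c = q ∧ c * q = q ∧
      0 ≤ (16 : ℂ) • ((p * p - p) * (p * p - p)) - (4 : ℂ) • ((q - p) * (q - p)) := by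
  have has : star a = a := (IsSelfAdjoint.of_nonneg ha0).star_eq
  have hps : star p = p := (IsSelfAdjoint.of_nonneg hp0).star_eq
  have hcs : star c = c := (IsSelfAdjoint.of_nonneg hc0).star_eq
  have hes : IsSelfAdjoint (p + p - 1) := by
    simp [IsSelfAdjoint, hps]
  have hsub := CFC.posPart_sub_negPart (p + p - 1) hes
  have hbd := CFC.posPart_mul_negPart (p + p - 1)
  have hdb := CFC.negPart_mul_posPart (p + p - 1)
  have hb0 := CFC.posPart_nonneg (p + p - 1)
  have hd0 := CFC.negPart_nonneg (p + p - 1)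
  have hbM : (p + p - 1)⁺ ∈ M := by
    apply vna_mem_of_commute
    intro y hy
    rw [CFC.posPart_def]
    apply Commute.cfcₙ_real
    exact commute_of_mem_commutant (sub_mem (add_mem hp hp) (one_mem M)) hy
  generalize (p + p - 1)⁺ = b at *
  generalize (p + p - 1)⁻ = d at *
  have hbs : star b = b := (IsSelfAdjoint.of_nonneg hb0).star_eq
  have hds : star d = d := (IsSelfAdjoint.of_nonneg hd0).star_eq
  obtain ⟨q, hqM, hqs, hqq, hbq, hqb, hq⟩ := exists_support_projection M b hbM hbs
  have hqd : q * d = 0 := hq d hbd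
  have hdq : d * q = 0 := by
    have := congrArg star hqd
    rwa [star_mul, hqs, hds, star_zero] at this
  -- `a`
  have hae : a * (b - d) = a := by rw [hsub, mul_sub, mul_add, hap, mul_one]; abel
  have had : a * d = 0 := by
    apply eq_zero_of_mul_add_self _ d hd0
    have h1 : a * (b - d) * d = a * d := by rw [hae]
    rw [mul_assoc, sub_mul, hbd, zero_sub, mul_neg] at h1
    rw [mul_assoc, ← h1, add_neg_cancel]
  have hab : a * b = a := by rw [mul_sub, had, sub_zero] at hae; exact hae
  have haq : a * q = a := by
    rw [← hab, mul_assoc, hbq]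
  have hqa : q * a = a := by
    have := congrArg star haq
    rwa [star_mul, hqs, has] at this
  -- `c`
  have hce : (1 - c) * (1 + (b - d)) = 0 := by
    rw [hsub]
    simp only [sub_mul, mul_add, mul_sub, hcp, mul_one, one_mul]
    abel
  have hcb : (1 - c) * b = 0 := by
    apply eq_zero_of_mul_add_self _ b hb0
    have h1 : (1 - c) * (1 + (b - d)) * b = 0 := by rw [hce, zero_mul]
    rw [mul_assoc, add_mul, sub_mul b d b, hdb, sub_zero, one_mul, mul_add] at h1
    rw [mul_assoc, add_comm]; exact h1
  have hbc : b * (1 - c) = 0 := by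
    have := congrArg star hcb
    simpa [star_mul, hbs, hcs] using this
  have hqc : q * c = q := by
    have := hq _ hbc
    rw [mul_sub, mul_one, sub_eq_zero] at this
    exact this.symm
  have hcq : c * q = q := by
    have := congrArg star hqc
    rwa [star_mul, hqs, hcs] at this
  refine ⟨q, hqM, hqs, hqq, haq, hqa, hqc, hcq, ?_⟩
  have hT : 0 ≤ (1 - (b + d)) * ((b + d) + (b + d) + star (b + d) * (b + d)) *
      (1 - (b + d)) := by
    apply IsSelfAdjoint.conjugate_nonneg
    · have := add_nonneg hb0 hd0
      exact add_nonneg (add_nonneg this this) (star_mul_self_nonneg _)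
    · simp [IsSelfAdjoint, hbs, hds]
  rw [star_add, hbs, hds] at hT
  have hu2 : (b + d) * (b + d) = (b - d) * (b - d) := by
    simp only [add_mul, mul_add, sub_mul, mul_sub, hbd, hdb]; abel
  have e1 : (16 : ℂ) • ((p * p - p) * (p * p - p)) =
      (1 - (b + d) * (b + d)) * (1 - (b + d) * (b + d)) := by
    have : 1 - (b + d) * (b + d) = (-4 : ℂ) • (p * p - p) := by
      rw [hu2, hsub]
      have : (-4 : ℂ) • (p * p - p) = (-4 : ℤ) • (p * p - p) := by
        rw [← Int.cast_smul_eq_zsmul ℂ]; norm_num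
      rw [this]
      noncomm_ring
    rw [this, smul_mul_smul_comm]; norm_num
  have e2 : (4 : ℂ) • ((q - p) * (q - p)) = (1 - (b + d)) * (1 - (b + d)) := by
    have h3 : (2 : ℂ) • (q - p) = q + q - 1 - (b - d) := by
      rw [hsub, two_smul]; abel
    have h4 : (4 : ℂ) • ((q - p) * (q - p)) = ((2 : ℂ) • (q - p)) * ((2 : ℂ) • (q - p)) := by
      rw [smul_mul_smul_comm]; norm_num
    rw [h4, h3]
    simp only [add_mul, mul_add, sub_mul, mul_sub, hbd, hdb, hqq, hqb, hbq, hqd, hdq, mul_one,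
      one_mul]
    abel
  rw [e1, e2]
  convert hT using 1
  generalize b + d = u
  noncomm_ring

theorem trace_nonneg_of_nonneg {H : Type*} [NormedAddCommGroup H] [InnerProductSpace ℂ H]
    [CompleteSpace H] (M : VonNeumannAlgebra H) (τ : M.toStarSubalgebra →ₗ[ℂ] ℂ)
    (hτpos : ∀ x : M.toStarSubalgebra, 0 ≤ τ (star x * x))
    (T : M.toStarSubalgebra) (hT : 0 ≤ (T : H →L[ℂ] H)) : 0 ≤ (τ T).re := by
  have hSM : CFC.sqrt (T : H →L[ℂ] H) ∈ M := by
    apply vna_mem_of_commute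
    intro y hy
    rw [CFC.sqrt_eq_cfc]
    apply Commute.cfc_nnreal
    exact commute_of_mem_commutant T.2 hy
  have hSs : star (CFC.sqrt (T : H →L[ℂ] H)) = CFC.sqrt (T : H →L[ℂ] H) :=
    (IsSelfAdjoint.of_nonneg (CFC.sqrt_nonneg _)).star_eq
  have h := hτpos ⟨CFC.sqrt (T : H →L[ℂ] H), hSM⟩
  have e : star (⟨CFC.sqrt (T : H →L[ℂ] H), hSM⟩ : M.toStarSubalgebra) *
      ⟨CFC.sqrt (T : H →L[ℂ] H), hSM⟩ = T := by
    apply Subtype.ext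
    change star (CFC.sqrt (T : H →L[ℂ] H)) * CFC.sqrt (T : H →L[ℂ] H) = T
    rw [hSs, CFC.sqrt_mul_sqrt_self _ hT]
  rw [e] at h
  exact (Complex.le_def.1 h).1

theorem norm2_estimate {A : Type*} [Ring A] [StarRing A] [Module ℂ A] (τ : A →ₗ[ℂ] ℂ)
    (δ : ℝ) (hδ0 : 0 < δ) (hδ : δ ≤ 1 / 4) (p r : A) (hps : star p = p) (hrs : star r = r)
    (hpδ : norm2 τ (p * p - p) ≤ δ)
    (h : 0 ≤ (τ ((16 : ℂ) • ((p * p - p) * (p * p - p)) -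
      (4 : ℂ) • ((r - p) * (r - p)))).re) :
    norm2 τ (r - p) ≤ 2 * Real.sqrt δ := by
  unfold norm2 at hpδ ⊢
  have s1 : star (p * p - p) = p * p - p := by rw [star_sub, star_mul, hps]
  have s2 : star (r - p) = r - p := by rw [star_sub, hrs, hps]
  rw [s1] at hpδ
  rw [s2]
  rw [map_sub, map_smul, map_smul] at h
  have h' : (τ ((r - p) * (r - p))).re ≤ 4 * (τ ((p * p - p) * (p * p - p))).re := by
    simp at h
    linarith
  have h2 : (τ ((p * p - p) * (p * p - p))).re ≤ δ ^ 2 := (Real.sqrt_le_left hδ0.le).1 hpδ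
  apply Real.sqrt_le_iff.2
  refine ⟨by positivity, ?_⟩
  rw [mul_pow, Real.sq_sqrt hδ0.le]
  nlinarith

/-- Let `M` be a von Neumann algebra acting on a complex Hilbert space `H` and let `τ` be a
tracial state on `M`.  Let `0 < δ ≤ 1/4` and let `a, p, c ∈ M` be positive contractions with
`ap = a = pa`, `pc = p = cp` and `‖p² - p‖_{2,τ} ≤ δ`.  Then there is a projection `q ∈ M`
with `aq = a = qa`, `qc = q = cq` and `‖q - p‖_{2,τ} ≤ 2√δ`. -/
theorem vonNeumann_stability_of_projections
    {H : Type*} [NormedAddCommGroup H] [InnerProductSpace ℂ H] [CompleteSpace H]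
    (M : VonNeumannAlgebra H)
    (τ : M.toStarSubalgebra →ₗ[ℂ] ℂ)
    (hτ1 : τ 1 = 1)
    (hτpos : ∀ x : M.toStarSubalgebra, 0 ≤ τ (star x * x))
    (hτtr : ∀ x y : M.toStarSubalgebra, τ (x * y) = τ (y * x))
    (δ : ℝ) (hδ0 : 0 < δ) (hδ : δ ≤ 1 / 4)
    (a p c : M.toStarSubalgebra)
    (ha0 : 0 ≤ (a : H →L[ℂ] H)) (ha1 : ‖(a : H →L[ℂ] H)‖ ≤ 1)
    (hp0 : 0 ≤ (p : H →L[ℂ] H)) (hp1 : ‖(p : H →L[ℂ] H)‖ ≤ 1)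
    (hc0 : 0 ≤ (c : H →L[ℂ] H)) (hc1 : ‖(c : H →L[ℂ] H)‖ ≤ 1)
    (hap : a * p = a) (hpa : p * a = a)
    (hpc : p * c = p) (hcp : c * p = p)
    (hpδ : norm2 τ (p * p - p) ≤ δ) :
    ∃ q : M.toStarSubalgebra, star q = q ∧ q * q = q ∧
      a * q = a ∧ q * a = a ∧ q * c = q ∧ c * q = q ∧
      norm2 τ (q - p) ≤ 2 * Real.sqrt δ := by
  obtain ⟨q, hqM, hqs, hqq, haq, hqa, hqc, hcq, hT⟩ :=
    exists_spectral_projection M a p c p.2 ha0 hp0 hc0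
      (congrArg Subtype.val hap) (congrArg Subtype.val hcp)
  have hps : star p = p := Subtype.ext (IsSelfAdjoint.of_nonneg hp0).star_eq
  obtain ⟨r, rfl⟩ : ∃ r : M.toStarSubalgebra, (r : H →L[ℂ] H) = q := ⟨⟨q, hqM⟩, rfl⟩
  have hrs : star r = r := Subtype.ext hqs
  have h := trace_nonneg_of_nonneg M τ hτpos ((16 : ℂ) • ((p * p - p) * (p * p - p)) -
    (4 : ℂ) • ((r - p) * (r - p))) hT
  exact ⟨r, hrs, Subtype.ext hqq, Subtype.ext haq, Subtype.ext hqa,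
    Subtype.ext hqc, Subtype.ext hcq, norm2_estimate τ δ hδ0 hδ p r hps hrs hpδ h⟩
end

section
/- Let H be a complex Hilbert space, let M be a von Neumann algebra acting on H, and let τ be a faithful tracial state on M (a linear functional with τ(1) = 1, τ(x*x) ≥ 0 with equality only when x = 0, and τ(xy) = τ(yx) for all x, y ∈ M). Let ε > 0 and let a ∈ M satisfy ‖a − |a|‖_{2,τ} < ε², where |a| = (a*a)^{1/2}. Then there exists a unitary u ∈ M such that ‖u − 1‖_{2,τ} < 4ε and a·g_ε(|a|) = u·f_ε(|a|), where g_ε(t) = max(t − ε, 0)/t for t > 0 and g_ε(0) = 0, f_ε(t) = max(t − ε, 0), and g_ε(|a|), f_ε(|a|) are defined by continuous functional calculus. -/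
open scoped ComplexOrder

section PolarForm

set_option linter.unusedSectionVars false

open Filter Topology

variable {H : Type*} [NormedAddCommGroup H] [InnerProductSpace ℂ H] [CompleteSpace H]

/-- Matrix coefficients of an operator. -/
noncomputable def matCoeff (T : H →L[ℂ] H) : H × H → ℂ := fun q => inner ℂ q.1 (T q.2)

/-- The unit ball, seen through matrix coefficients. -/
def ballCoeff (H : Type*) [NormedAddCommGroup H] [InnerProductSpace ℂ H] [CompleteSpace H] :
    Set (H × H → ℂ) := {B | ∃ T : H →L[ℂ] H, (∀ w, ‖T w‖ ≤ ‖w‖) ∧ B = matCoeff T}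

lemma matCoeff_injective : Function.Injective (matCoeff (H := H)) := by
  intro S T h
  ext w
  refine ext_inner_left ℂ fun v => ?_
  exact congrFun h (v, w)

lemma mem_ballCoeff_iff (B : H × H → ℂ) : B ∈ ballCoeff H ↔
    ((∀ v v' w, B (v + v', w) = B (v, w) + B (v', w)) ∧
    (∀ (c : ℂ) v w, B (c • v, w) = (starRingEnd ℂ) c * B (v, w)) ∧
    (∀ v w w', B (v, w + w') = B (v, w) + B (v, w')) ∧
    (∀ (c : ℂ) v w, B (v, c • w) = c * B (v, w)) ∧
    (∀ v w, ‖B (v, w)‖ ≤ ‖v‖ * ‖w‖)) := by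
  constructor
  · rintro ⟨T, hT, rfl⟩
    refine ⟨?_, ?_, ?_, ?_, ?_⟩
    · intro v v' w; simp [matCoeff]
    · intro c v w; simp [matCoeff, mul_comm]
    · intro v w w'; simp [matCoeff]
    · intro c v w; simp [matCoeff]
    · intro v w
      exact (norm_inner_le_norm _ _).trans (mul_le_mul_of_nonneg_left (hT w) (norm_nonneg _))
  · rintro ⟨h1, h2, h3, h4, h5⟩
    let L : H →ₗ⋆[ℂ] H →ₗ[ℂ] ℂ := LinearMap.mk₂'ₛₗ _ _ (fun v w => B (v, w))
      h1 (fun c v w => by simpa using h2 c v w) h3 (fun c v w => by simpa using h4 c v w)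
    let L' : H →L⋆[ℂ] H →L[ℂ] ℂ := L.mkContinuous₂ 1 (fun v w => by simpa [L] using h5 v w)
    let S := InnerProductSpace.continuousLinearMapOfBilin L'
    have hS : ∀ v w, inner ℂ (S v) w = B (v, w) := fun v w =>
      InnerProductSpace.continuousLinearMapOfBilin_apply L' v w
    have hT : ∀ v w, inner ℂ v (ContinuousLinearMap.adjoint S w) = B (v, w) := fun v w => by
      rw [ContinuousLinearMap.adjoint_inner_right, hS]
    refine ⟨ContinuousLinearMap.adjoint S, fun w => ?_, ?_⟩
    · have h := h5 (ContinuousLinearMap.adjoint S w) w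
      rw [← hT] at h
      rw [inner_self_eq_norm_sq_to_K, norm_pow, RCLike.norm_ofReal, abs_norm] at h
      by_contra hc
      push Not at hc
      have := norm_nonneg w
      nlinarith
    · funext q
      exact (hT q.1 q.2).symm

lemma isCompact_ballCoeff : IsCompact (ballCoeff H) := by
  have hc : IsCompact (Set.univ.pi fun q : H × H => Metric.closedBall (0 : ℂ) (‖q.1‖ * ‖q.2‖)) :=
    isCompact_univ_pi fun q => isCompact_closedBall _ _
  refine hc.of_isClosed_subset ?_ ?_
  · have : ballCoeff H = {B | (∀ v v' w, B (v + v', w) = B (v, w) + B (v', w)) ∧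
      (∀ (c : ℂ) v w, B (c • v, w) = (starRingEnd ℂ) c * B (v, w)) ∧
      (∀ v w w', B (v, w + w') = B (v, w) + B (v, w')) ∧
      (∀ (c : ℂ) v w, B (v, c • w) = c * B (v, w)) ∧
      (∀ v w, ‖B (v, w)‖ ≤ ‖v‖ * ‖w‖)} := by
      ext B; exact mem_ballCoeff_iff B
    rw [this]
    simp only [Set.ofPred_and, Set.ofPred_forall]
    refine IsClosed.inter ?_ (IsClosed.inter ?_ (IsClosed.inter ?_ (IsClosed.inter ?_ ?_)))
    · exact isClosed_iInter fun _ => isClosed_iInter fun _ => isClosed_iInter fun _ =>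
        isClosed_eq (by fun_prop) (by fun_prop)
    · exact isClosed_iInter fun _ => isClosed_iInter fun _ => isClosed_iInter fun _ =>
        isClosed_eq (by fun_prop) (by fun_prop)
    · exact isClosed_iInter fun _ => isClosed_iInter fun _ => isClosed_iInter fun _ =>
        isClosed_eq (by fun_prop) (by fun_prop)
    · exact isClosed_iInter fun _ => isClosed_iInter fun _ => isClosed_iInter fun _ =>
        isClosed_eq (by fun_prop) (by fun_prop)
    · exact isClosed_iInter fun _ => isClosed_iInter fun _ =>
        isClosed_le (by fun_prop) (by fun_prop)
  · intro B hB q _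
    have := ((mem_ballCoeff_iff B).1 hB).2.2.2.2 q.1 q.2
    simpa using this

/-- Contractions in `M` through matrix coefficients. -/
def ballM (M : VonNeumannAlgebra H) : Set (H × H → ℂ) :=
  {B | ∃ T : H →L[ℂ] H, (∀ w, ‖T w‖ ≤ ‖w‖) ∧ T ∈ M ∧ B = matCoeff T}

lemma mem_vn_iff (M : VonNeumannAlgebra H) (T : H →L[ℂ] H) :
    T ∈ M ↔ ∀ m ∈ M.commutant, m * T = T * m := by
  conv_lhs => rw [← M.commutant_commutant]
  exact VonNeumannAlgebra.mem_commutant_iff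

lemma isCompact_ballM (M : VonNeumannAlgebra H) : IsCompact (ballM M) := by
  have : ballM M = ballCoeff H ∩ {B | ∀ m ∈ M.commutant, ∀ v w,
      B (v, m w) = B (star m v, w)} := by
    ext B
    constructor
    · rintro ⟨T, hT, hM, rfl⟩
      refine ⟨⟨T, hT, rfl⟩, fun m hm v w => ?_⟩
      have := (mem_vn_iff M T).1 hM m hm
      have h2 : m (T w) = T (m w) := congrArg (fun S : H →L[ℂ] H => S w) this
      simp only [matCoeff, ContinuousLinearMap.star_eq_adjoint,
        ContinuousLinearMap.adjoint_inner_left, h2]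
    · rintro ⟨⟨T, hT, rfl⟩, hm⟩
      refine ⟨T, hT, (mem_vn_iff M T).2 fun m hm' => ?_, rfl⟩
      ext w
      refine ext_inner_left ℂ fun v => ?_
      have := hm m hm' v w
      simp only [matCoeff, ContinuousLinearMap.star_eq_adjoint,
        ContinuousLinearMap.adjoint_inner_left] at this
      simpa using this.symm
  rw [this]
  refine isCompact_ballCoeff.inter_right ?_
  simp only [Set.ofPred_forall]
  exact isClosed_iInter fun _ => isClosed_iInter fun _ => isClosed_iInter fun _ =>
    isClosed_iInter fun _ => isClosed_eq (by fun_prop) (by fun_prop)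

/-- Contractions `T` in `M` with `T b = y`. -/
def ballMb (M : VonNeumannAlgebra H) (b y : H →L[ℂ] H) : Set (H × H → ℂ) :=
  {B | ∃ T : H →L[ℂ] H, (∀ w, ‖T w‖ ≤ ‖w‖) ∧ T ∈ M ∧ T * b = y ∧ B = matCoeff T}

lemma ballMb_eq (M : VonNeumannAlgebra H) (b y : H →L[ℂ] H) :
    ballMb M b y = ballM M ∩ {B | ∀ v w, B (v, b w) = inner ℂ v (y w)} := by
  ext B
  constructor
  · rintro ⟨T, hT, hM, rfl, rfl⟩
    exact ⟨⟨T, hT, hM, rfl⟩, fun v w => rfl⟩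
  · rintro ⟨⟨T, hT, hM, rfl⟩, h⟩
    refine ⟨T, hT, hM, ?_, rfl⟩
    ext w
    refine ext_inner_left ℂ fun v => ?_
    exact h v w

lemma isCompact_ballMb (M : VonNeumannAlgebra H) (b y : H →L[ℂ] H) :
    IsCompact (ballMb M b y) := by
  rw [ballMb_eq]
  refine (isCompact_ballM M).inter_right ?_
  simp only [Set.ofPred_forall]
  exact isClosed_iInter fun _ => isClosed_iInter fun _ =>
    isClosed_eq (by fun_prop) (by fun_prop)

/-- approximate solutions give an exact solution -/
lemma ballMb_nonempty (M : VonNeumannAlgebra H) (b y : H →L[ℂ] H) (x : ℕ → H →L[ℂ] H)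
    (hx : ∀ n w, ‖x n w‖ ≤ ‖w‖) (hxM : ∀ n, x n ∈ M)
    (hlim : Tendsto (fun n => x n * b) atTop (𝓝 y)) : (ballMb M b y).Nonempty := by
  obtain ⟨B, hB, hle⟩ := isCompact_iff_ultrafilter_le_nhds.1 (isCompact_ballM M)
    ((Filter.hyperfilter ℕ).map fun n => matCoeff (x n)) (by
      rw [Filter.le_principal_iff]
      exact Filter.mem_map.2 (Filter.univ_mem' fun n => ⟨x n, hx n, hxM n, rfl⟩))
  refine ⟨B, ?_⟩
  rw [ballMb_eq]
  refine ⟨hB, fun v w => ?_⟩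
  have hU : (Filter.hyperfilter ℕ : Filter ℕ) ≤ atTop := by
    rw [← Nat.cofinite_eq_atTop]; exact Filter.hyperfilter_le_cofinite
  have h1 : Tendsto (fun n => matCoeff (x n) (v, b w)) (Filter.hyperfilter ℕ : Filter ℕ)
      (𝓝 (B (v, b w))) := ((continuous_apply (v, b w)).tendsto B).comp hle
  have h2 : Tendsto (fun n => matCoeff (x n) (v, b w)) (Filter.hyperfilter ℕ : Filter ℕ)
      (𝓝 (inner ℂ v (y w))) := by
    have h3 : Continuous fun S : H →L[ℂ] H => inner ℂ v (S w) := by fun_prop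
    exact ((h3.tendsto y).comp hlim).mono_left hU
  exact tendsto_nhds_unique h1 h2

lemma contr_adjoint {x : H →L[ℂ] H} (hx : ∀ w, ‖x w‖ ≤ ‖w‖) (w : H) : ‖star x w‖ ≤ ‖w‖ := by
  have h1 : ‖x‖ ≤ 1 := x.opNorm_le_bound zero_le_one (by simpa using hx)
  have h2 : ‖star x‖ ≤ 1 := by rwa [norm_star]
  simpa using (star x).le_of_opNorm_le h2 w

lemma defect_norm_sq {x : H →L[ℂ] H} (hx : ∀ w, ‖x w‖ ≤ ‖w‖) (w : H) :
    ‖(1 - star x * x) w‖ ^ 2 ≤ ‖w‖ ^ 2 - ‖x w‖ ^ 2 := by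
  have h : (1 - star x * x) w = w - star x (x w) := by simp
  rw [h, @norm_sub_sq ℂ]
  have h2 : inner ℂ w (star x (x w)) = inner ℂ (x w) (x w) := by
    rw [ContinuousLinearMap.star_eq_adjoint, ContinuousLinearMap.adjoint_inner_right]
  rw [h2, inner_self_eq_norm_sq]
  have h3 := contr_adjoint hx (x w)
  have := norm_nonneg (star x (x w))
  nlinarith

lemma perturb_contr {x t : H →L[ℂ] H} (hx : ∀ w, ‖x w‖ ≤ ‖w‖) (ht : ∀ w, ‖t w‖ ≤ 1 / 3 * ‖w‖)
    (w : H) : ‖(x + (1 - x * star x) * t * (1 - star x * x)) w‖ ≤ ‖w‖ := by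
  have hc := defect_norm_sq hx w
  set cw := (1 - star x * x) w with hcw
  have hd : ∀ v, ‖(1 - x * star x) v‖ ≤ ‖v‖ := by
    intro v
    have h := defect_norm_sq (contr_adjoint hx) v
    rw [star_star] at h
    have h1 := norm_nonneg v
    have := sq_nonneg ‖star x v‖
    exact abs_le_of_sq_le_sq' (by linarith) h1 |>.2
  have e : (x + (1 - x * star x) * t * (1 - star x * x)) w = x w + (1 - x * star x) (t cw) := by
    simp [hcw]
  have hin : inner ℂ (x w) ((1 - x * star x) (t cw)) = inner ℂ (x cw) (t cw) := by
    have h1 : star (1 - x * star x) = 1 - x * star x := by simp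
    have h2 : (1 - x * star x) (x w) = x cw := by simp [hcw]
    rw [← h2]
    nth_rewrite 1 [← h1]
    rw [ContinuousLinearMap.star_eq_adjoint, ContinuousLinearMap.adjoint_inner_right]
  have h1 : ‖(1 - x * star x) (t cw)‖ ≤ 1 / 3 * ‖cw‖ := (hd _).trans (ht _)
  have h2 : RCLike.re (inner ℂ (x cw) (t cw)) ≤ ‖cw‖ * (1 / 3 * ‖cw‖) :=
    (re_inner_le_norm _ _).trans (mul_le_mul (hx _) (ht _) (norm_nonneg _) (norm_nonneg _))
  have h3 : ‖x w + (1 - x * star x) (t cw)‖ ^ 2 ≤ ‖w‖ ^ 2 := by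
    rw [@norm_add_sq ℂ, hin]
    have := norm_nonneg ((1 - x * star x) (t cw))
    have := norm_nonneg cw
    nlinarith
  rw [e]
  exact (abs_le_of_sq_le_sq' h3 (norm_nonneg _)).2

/-- Extreme contraction with `x b = y`: `(1 - x x*) M (1 - x* x) = 0`. -/
lemma exists_extreme (M : VonNeumannAlgebra H) (b y : H →L[ℂ] H)
    (hby : ∀ w, ‖b w‖ = ‖y w‖) (hne : (ballMb M b y).Nonempty) :
    ∃ x ∈ M, x * b = y ∧ ∀ t ∈ M, (1 - x * star x) * t * (1 - star x * x) = 0 := by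
  obtain ⟨B, hB⟩ := (isCompact_ballMb M b y).extremePoints_nonempty hne
  rw [mem_extremePoints] at hB
  obtain ⟨⟨x, hx, hxM, hxb, rfl⟩, hext⟩ := hB
  refine ⟨x, hxM, hxb, fun t ht => ?_⟩
  have hcb : (1 - star x * x) * b = 0 := by
    ext w
    have h := defect_norm_sq hx (b w)
    have h2 : x (b w) = y w := congrArg (fun S : H →L[ℂ] H => S w) hxb
    rw [h2, hby w, sub_self] at h
    have h3 : ‖(1 - star x * x) (b w)‖ = 0 := by
      have := norm_nonneg ((1 - star x * x) (b w))
      nlinarith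
    simpa using norm_eq_zero.1 h3
  obtain ⟨δ, hδ, hδt⟩ : ∃ δ : ℝ, 0 < δ ∧ δ * ‖t‖ ≤ 1 / 3 := by
    refine ⟨1 / (3 * (‖t‖ + 1)), by positivity, ?_⟩
    rw [div_mul_eq_mul_div, div_le_div_iff₀ (by positivity) (by norm_num)]
    nlinarith [norm_nonneg t]
  have key : ∀ σ : ℂ, ‖σ‖ = 1 → matCoeff (x + (1 - x * star x) * ((σ * δ : ℂ) • t) *
      (1 - star x * x)) ∈ ballMb M b y := by
    intro σ hσ
    refine ⟨_, perturb_contr hx ?_, ?_, ?_, rfl⟩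
    · intro w
      calc ‖((σ * δ : ℂ) • t) w‖ = δ * ‖t w‖ := by
            simp [norm_smul, hσ, abs_of_pos hδ]
        _ ≤ δ * (‖t‖ * ‖w‖) := by gcongr; exact t.le_opNorm w
        _ = (δ * ‖t‖) * ‖w‖ := by ring
        _ ≤ _ := by gcongr
    · have hs : star x ∈ M := star_mem hxM
      have htt : ((σ * δ : ℂ) • t) ∈ M := M.toStarSubalgebra.smul_mem ht _
      exact add_mem hxM (mul_mem (mul_mem (sub_mem (one_mem _) (mul_mem hxM hs)) htt)
        (sub_mem (one_mem _) (mul_mem hs hxM)))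
    · rw [add_mul, mul_assoc, hcb, mul_zero, add_zero, hxb]
  have h := hext _ (key 1 (by simp)) _ (key (-1) (by simp)) (by
    refine ⟨1 / 2, 1 / 2, by norm_num, by norm_num, by norm_num, ?_⟩
    funext q
    simp [matCoeff]
    ring)
  have h2 := matCoeff_injective h.1
  rw [add_eq_left, mul_smul_comm, smul_mul_assoc, smul_eq_zero] at h2
  refine h2.resolve_left ?_
  have hδ0 : δ ≠ 0 := ne_of_gt hδ
  simp [hδ0]

/-- central projection lemma -/
lemma exists_central (M : VonNeumannAlgebra H) (c d : H →L[ℂ] H) (hc : c ∈ M)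
    (h : ∀ t ∈ M, c * t * d = 0) :
    ∃ e ∈ M, (∀ m ∈ M, m * e = e * m) ∧ c * e = 0 ∧ e * d = d := by
  let L : Submodule ℂ H := ⨅ t : M, (c * (t : H →L[ℂ] H)).ker
  have hL : ∀ v, v ∈ L ↔ ∀ t ∈ M, c (t v) = 0 := by
    intro v
    simp [L, Submodule.mem_iInf]
  have hcl : IsClosed (L : Set H) := by
    have : (L : Set H) = ⋂ t : M, {v | (c * (t : H →L[ℂ] H)) v = 0} := by
      ext v
      simp only [SetLike.mem_coe, hL, Set.mem_iInter]
      constructor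
      · intro hv t
        exact hv t t.2
      · intro hv t ht
        exact hv ⟨t, ht⟩
    rw [this]
    exact isClosed_iInter fun t => isClosed_eq (ContinuousLinearMap.continuous _) continuous_const
  have : CompleteSpace L := hcl.completeSpace_coe
  have hp : IsStarProjection L.starProjection := isStarProjection_starProjection
  have e1 : L.starProjection ∈ M := by
    rw [VonNeumannAlgebra.IsStarProjection.mem_iff hp]
    intro m hm
    rw [Submodule.range_starProjection]
    intro v hv
    rw [hL] at hv
    show m v ∈ L
    rw [hL]
    intro t ht
    have hmt := VonNeumannAlgebra.mem_commutant_iff.1 hm t ht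
    have hmc := VonNeumannAlgebra.mem_commutant_iff.1 hm c hc
    have a1 : t (m v) = m (t v) := congrArg (fun S : H →L[ℂ] H => S v) hmt
    have a2 : c (m (t v)) = m (c (t v)) := congrArg (fun S : H →L[ℂ] H => S (t v)) hmc
    rw [a1, a2, hv t ht, map_zero]
  have e2 : L.starProjection ∈ M.commutant := by
    rw [VonNeumannAlgebra.IsStarProjection.mem_iff hp, VonNeumannAlgebra.commutant_commutant]
    intro m hm
    rw [Submodule.range_starProjection]
    intro v hv
    rw [hL] at hv
    show m v ∈ L
    rw [hL]
    intro t ht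
    exact hv (t * m) (mul_mem ht hm)
  refine ⟨_, e1, VonNeumannAlgebra.mem_commutant_iff.1 e2, ?_, ?_⟩
  · ext v
    have hv : L.starProjection v ∈ L := L.starProjection_apply_mem v
    exact (hL _).1 hv 1 (one_mem _)
  · ext v
    refine Submodule.starProjection_eq_self_iff.2 ((hL _).2 fun t ht => ?_)
    exact congrArg (fun S : H →L[ℂ] H => S v) (h t ht)

/-- purely algebraic end of the argument -/
lemma unitary_of_trace {A : Type*} [Ring A] [StarRing A] [Algebra ℂ A]
    (τ : A →ₗ[ℂ] ℂ) (hτf : ∀ x : A, τ (star x * x) = 0 → x = 0)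
    (hτtr : ∀ x y : A, τ (x * y) = τ (y * x)) (x e : A)
    (hcx : ∀ t, (1 - x * star x) * t * (1 - star x * x) = 0)
    (he : ∀ m, m * e = e * m) (hce : (1 - star x * x) * e = 0)
    (hed : e * (1 - x * star x) = 1 - x * star x) :
    star x * x = 1 ∧ x * star x = 1 := by
  have htc : τ (1 - star x * x) = 0 := by
    have h1 : τ (1 - star x * x) = τ (1 - x * star x) := by
      rw [map_sub, map_sub, hτtr]
    rw [h1, ← hed, mul_sub, mul_one, map_sub]
    have h2 : τ (e * (x * star x)) = τ (star x * x * e) := by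
      rw [← mul_assoc, hτtr, ← he x, mul_assoc]
    rw [h2, ← map_sub]
    have h3 : e - star x * x * e = 0 := by rw [← hce]; noncomm_ring
    rw [h3, map_zero]
  have idem : ∀ c : A, star c = c → c * c = c * c * c → c = star c * c := by
    intro c hc h
    have h0 : star (c - c * c) * (c - c * c) = 0 := by
      rw [star_sub, star_mul, hc]
      have : (c - c * c) * (c - c * c) = (c * c - c * c * c) - (c * c - c * c * c) * c := by
        noncomm_ring
      rw [this, ← h]; simp
    have := hτf (c - c * c) (by rw [h0, map_zero])
    rw [hc]
    exact sub_eq_zero.1 this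
  have hc0 : 1 - star x * x = 0 := by
    have hid := idem (1 - star x * x) (by simp) (by
      have h := congrArg (fun z => star x * z) (hcx x)
      simp only [mul_zero] at h
      rw [← sub_eq_zero, ← h]
      noncomm_ring)
    exact hτf _ (by rw [← hid]; exact htc)
  have hd0 : 1 - x * star x = 0 := by
    have hxx : star x * x = 1 := (sub_eq_zero.1 hc0).symm
    have e1 : (1 - x * star x) * (1 - x * star x) = 1 - x * star x := by
      have : x * star x * (x * star x) = x * (star x * x) * star x := by noncomm_ring
      rw [sub_mul, one_mul, mul_sub, mul_one, this, hxx]; simp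
    refine hτf _ ?_
    have : star (1 - x * star x) = 1 - x * star x := by simp
    rw [this, e1, map_sub, hτtr x, ← map_sub, hc0, map_zero]
  exact ⟨(sub_eq_zero.1 hc0).symm, (sub_eq_zero.1 hd0).symm⟩

lemma cfc_mem_vn (M : VonNeumannAlgebra H) {b : H →L[ℂ] H} (hb : b ∈ M) (f : ℝ → ℝ) :
    cfc f b ∈ M := by
  rw [mem_vn_iff]
  intro m hm
  have : Commute b m := VonNeumannAlgebra.mem_commutant_iff.1 hm b hb
  exact (this.cfc_real f).symm

lemma approx_polar (M : VonNeumannAlgebra H) {b y : H →L[ℂ] H} (hb : 0 ≤ b) (hbM : b ∈ M)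
    (hyM : y ∈ M) (hby : b * b = star y * y) : (ballMb M b y).Nonempty := by
  have hsa : IsSelfAdjoint b := hb.isSelfAdjoint
  have hsp : ∀ t ∈ spectrum ℝ b, 0 ≤ t := fun t ht => spectrum_nonneg_of_nonneg hb ht
  have hnorm : ∀ f : ℝ → ℝ, ContinuousOn f (spectrum ℝ b) → ∀ C : ℝ, 0 ≤ C →
      (∀ t, 0 ≤ t → |t * f t| ≤ C) → ‖y * cfc f b‖ ≤ C := by
    intro f hf C hC h
    have h1 : star (y * cfc f b) * (y * cfc f b) = star (b * cfc f b) * (b * cfc f b) := by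
      have e : ∀ z : H →L[ℂ] H, star (z * cfc f b) * (z * cfc f b)
          = star (cfc f b) * (star z * z) * cfc f b := by intro z; rw [star_mul]; noncomm_ring
      rw [e, e, hsa.star_eq, hby]
    have h2 : ‖y * cfc f b‖ = ‖b * cfc f b‖ := by
      have := congrArg norm h1
      rw [CStarRing.norm_star_mul_self, CStarRing.norm_star_mul_self] at this
      exact (mul_self_inj (norm_nonneg _) (norm_nonneg _)).1 this
    have h3 : b * cfc f b = cfc (fun t => t * f t) b := by
      rw [cfc_mul (fun t => t) f b (by fun_prop) hf, cfc_id' ℝ b]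
    rw [h2, h3]
    exact norm_cfc_le hC fun t ht => h t (hsp t ht)
  let δ : ℕ → ℝ := fun n => 1 / ((n : ℝ) + 1)
  have hδ : ∀ n, 0 < δ n := fun n => by positivity
  have hcont : ∀ n, ContinuousOn (fun t : ℝ => 1 / (t + δ n)) (spectrum ℝ b) := fun n =>
    ContinuousOn.div (by fun_prop) (by fun_prop) fun t ht => by
      have := hsp t ht; have := hδ n; positivity
  refine ballMb_nonempty M b y (fun n => y * cfc (fun t : ℝ => 1 / (t + δ n)) b) ?_ ?_ ?_
  · intro n w
    have : ‖y * cfc (fun t : ℝ => 1 / (t + δ n)) b‖ ≤ 1 := by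
      refine hnorm _ (hcont n) 1 zero_le_one fun t ht => ?_
      have := hδ n
      rw [abs_of_nonneg (by positivity), mul_one_div, div_le_one (by positivity)]
      linarith
    simpa using (y * cfc (fun t : ℝ => 1 / (t + δ n)) b).le_of_opNorm_le this w
  · intro n
    exact mul_mem hyM (cfc_mem_vn M hbM _)
  · rw [tendsto_iff_norm_sub_tendsto_zero]
    refine squeeze_zero (fun _ => norm_nonneg _) (fun n => ?_)
      (tendsto_one_div_add_atTop_nhds_zero_nat (𝕜 := ℝ))
    have e : y * cfc (fun t : ℝ => 1 / (t + δ n)) b * b - y =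
        y * cfc (fun t : ℝ => 1 / (t + δ n) * t - 1) b := by
      rw [cfc_sub (fun t : ℝ => 1 / (t + δ n) * t) (fun _ => 1) b
        ((hcont n).mul continuousOn_id) (by fun_prop),
        cfc_mul _ (fun t => t) b (hcont n) (by fun_prop), cfc_id' ℝ b, cfc_const_one ℝ b]
      noncomm_ring
    rw [e]
    refine hnorm _ (((hcont n).mul continuousOn_id).sub continuousOn_const) _ (hδ n).le
      fun t ht => ?_
    have h1 := hδ n
    have : t * (1 / (t + δ n) * t - 1) = - (t / (t + δ n) * δ n) := by
      field_simp
      ring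
    change |t * (1 / (t + δ n) * t - 1)| ≤ δ n
    rw [this, abs_neg, abs_of_nonneg (by positivity)]
    have : t / (t + δ n) ≤ 1 := by rw [div_le_one (by positivity)]; linarith
    nlinarith

lemma unitary_polar (M : VonNeumannAlgebra H) (τ : M.toStarSubalgebra →ₗ[ℂ] ℂ)
    (hτf : ∀ x : M.toStarSubalgebra, τ (star x * x) = 0 → x = 0)
    (hτtr : ∀ x y : M.toStarSubalgebra, τ (x * y) = τ (y * x))
    (b y : M.toStarSubalgebra) (hb : 0 ≤ (b : H →L[ℂ] H)) (hby : b * b = star y * y) :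
    ∃ u : M.toStarSubalgebra, star u * u = 1 ∧ u * star u = 1 ∧ u * b = y := by
  have hby' : (b : H →L[ℂ] H) * b = star (y : H →L[ℂ] H) * y := congrArg Subtype.val hby
  have hnorm : ∀ w, ‖(b : H →L[ℂ] H) w‖ = ‖(y : H →L[ℂ] H) w‖ := by
    intro w
    have h1 : ∀ z : H →L[ℂ] H, RCLike.re (inner ℂ w ((star z * z) w)) = ‖z w‖ ^ 2 := by
      intro z
      rw [ContinuousLinearMap.star_eq_adjoint, mul_apply_eq_comp,
        ContinuousLinearMap.adjoint_inner_right, inner_self_eq_norm_sq]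
    have h2 := h1 b
    rw [hb.isSelfAdjoint.star_eq, hby', h1] at h2
    exact ((sq_eq_sq₀ (norm_nonneg _) (norm_nonneg _)).1 h2).symm
  obtain ⟨x, hxM, hxb, hx⟩ := exists_extreme M (b : H →L[ℂ] H) (y : H →L[ℂ] H) hnorm
    (approx_polar M hb b.2 y.2 hby')
  have hs : star x ∈ M := star_mem hxM
  have hcM : 1 - star x * x ∈ M := sub_mem (one_mem _) (mul_mem hs hxM)
  obtain ⟨e, heM, he1, he2, he3⟩ := exists_central M (1 - star x * x) (1 - x * star x) hcM (by
    intro t ht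
    have := congrArg star (hx (star t) (star_mem ht))
    simpa [mul_assoc] using this)
  obtain ⟨u1, u2⟩ := unitary_of_trace τ hτf hτtr (⟨x, hxM⟩ : M.toStarSubalgebra) ⟨e, heM⟩
    (fun t => Subtype.ext (hx t t.2)) (fun m => Subtype.ext (he1 m m.2)) (Subtype.ext he2)
    (Subtype.ext he3)
  exact ⟨⟨x, hxM⟩, u1, u2, Subtype.ext hxb⟩

section Alg

variable {A : Type*} [Ring A] [StarRing A] [Algebra ℂ A] [StarModule ℂ A]

/-- the square of the 2-norm -/
noncomputable def qf (τ : A →ₗ[ℂ] ℂ) (x : A) : ℝ := (τ (star x * x)).re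

lemma qf_nonneg {τ : A →ₗ[ℂ] ℂ} (hpos : ∀ x : A, 0 ≤ τ (star x * x)) (x : A) : 0 ≤ qf τ x :=
  (Complex.le_def.1 (hpos x)).1

lemma qf_add {τ : A →ₗ[ℂ] ℂ} (hpos : ∀ x : A, 0 ≤ τ (star x * x)) (x y : A) :
    qf τ (x + y) ≤ 2 * qf τ x + 2 * qf τ y := by
  have h := qf_nonneg hpos (x - y)
  have e : qf τ (x + y) + qf τ (x - y) = 2 * qf τ x + 2 * qf τ y := by
    simp only [qf, star_add, star_sub, add_mul, mul_add, sub_mul, mul_sub, map_add, map_sub,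
      Complex.add_re, Complex.sub_re]
    ring
  linarith

lemma qf_star {τ : A →ₗ[ℂ] ℂ} (htr : ∀ x y : A, τ (x * y) = τ (y * x)) (x : A) :
    qf τ (star x) = qf τ x := by
  simp only [qf, star_star, htr x]

lemma qf_neg {τ : A →ₗ[ℂ] ℂ} (x : A) : qf τ (-x) = qf τ x := by simp [qf]

lemma qf_unitary_left {τ : A →ₗ[ℂ] ℂ} {v : A} (hv : star v * v = 1) (x : A) :
    qf τ (v * x) = qf τ x := by
  have : star (v * x) * (v * x) = star x * (star v * v) * x := by rw [star_mul]; noncomm_ring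
  rw [qf, this, hv, mul_one, qf]

lemma qf_mul_right {τ : A →ₗ[ℂ] ℂ} (hpos : ∀ x : A, 0 ≤ τ (star x * x))
    (htr : ∀ x y : A, τ (x * y) = τ (y * x)) {r m : A} (hr : star r = r) (hm : star m = m)
    (h : r * r + m * m = 1) (x : A) : qf τ (x * r) ≤ qf τ x := by
  have h1 := qf_nonneg hpos (x * m)
  have e : ∀ s : A, star s = s → τ (star (x * s) * (x * s)) = τ (star x * x * (s * s)) := by
    intro s hs
    rw [star_mul, hs, mul_assoc, htr s]
    congr 1; noncomm_ring
  have : qf τ (x * r) + qf τ (x * m) = qf τ x := by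
    rw [qf, qf, qf, e r hr, e m hm, ← Complex.add_re, ← map_add, ← mul_add, h, mul_one]
  linarith

lemma qf_smul {τ : A →ₗ[ℂ] ℂ} (c : ℝ) (x : A) : qf τ ((c : ℂ) • x) = c ^ 2 * qf τ x := by
  simp only [qf, star_smul, smul_mul_assoc, mul_smul_comm, map_smul, smul_eq_mul]
  simp
  ring

lemma qf_best {τ : A →ₗ[ℂ] ℂ} (hpos : ∀ x : A, 0 ≤ τ (star x * x))
    (htr : ∀ x y : A, τ (x * y) = τ (y * x)) {w v s : A} (hw : star w * w = 1)
    (hv : star v * v = 1) (hw' : w * star w = 1) (hv' : v * star v = 1) (hs : star s = s) :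
    qf τ (w - w * (s * s)) ≤ qf τ (v - w * (s * s)) := by
  have h := qf_nonneg hpos (s - s * (star w * v))
  have e1 : qf τ (w - w * (s * s)) = (τ 1).re - 2 * (τ (s * s)).re + (τ (s * s * (s * s))).re := by
    have : star (w - w * (s * s)) * (w - w * (s * s)) = star w * w - (star w * w) * (s * s)
        - s * s * (star w * w) + s * s * (star w * w) * (s * s) := by
      rw [star_sub, star_mul, star_mul, hs]; noncomm_ring
    rw [qf, this, hw]
    simp only [one_mul, mul_one, map_add, map_sub, Complex.add_re, Complex.sub_re]
    ring
  have e2 : qf τ (v - w * (s * s)) = (τ 1).re - (τ (star v * w * (s * s))).re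
      - (τ (s * s * (star w * v))).re + (τ (s * s * (s * s))).re := by
    have : star (v - w * (s * s)) * (v - w * (s * s)) = star v * v - star v * w * (s * s)
        - s * s * (star w * v) + s * s * (star w * w) * (s * s) := by
      rw [star_sub, star_mul, star_mul, hs]; noncomm_ring
    rw [qf, this, hw, hv]
    simp only [mul_one, map_add, map_sub, Complex.add_re, Complex.sub_re]
  have e3 : qf τ (s - s * (star w * v)) = 2 * (τ (s * s)).re - (τ (star v * w * (s * s))).re
      - (τ (s * s * (star w * v))).re := by
    have : star (s - s * (star w * v)) * (s - s * (star w * v)) = s * s - star v * w * (s * s)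
        - s * s * (star w * v) + (star v * w * s) * (s * (star w * v)) := by
      simp only [star_sub, star_mul, star_star, hs]; noncomm_ring
    have h5 : s * (star w * v) * (star v * w * s) = s * s := by
      calc _ = s * (star w * (v * star v) * w) * s := by noncomm_ring
        _ = _ := by rw [hv', mul_one, hw, mul_one]
    rw [qf, this]
    simp only [map_add, map_sub, Complex.add_re, Complex.sub_re, htr (star v * w * s), h5]
    ring
  linarith

lemma alg_main (τ : A →ₗ[ℂ] ℂ) (hpos : ∀ x : A, 0 ≤ τ (star x * x))
    (hf : ∀ x : A, τ (star x * x) = 0 → x = 0)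
    (htr : ∀ x y : A, τ (x * y) = τ (y * x)) (ε : ℝ) (hε : 0 < ε)
    (hpolar : ∀ y : A, ∃ w s : A, star w * w = 1 ∧ w * star w = 1 ∧ star s = s ∧
      w * (s * s) = y ∧ s * s * (s * s) = star y * y)
    (u b f r mr K mK : A) (hu : star u * u = 1) (hu' : u * star u = 1)
    (hr : star r = r) (hmr : star mr = mr) (hrm : r * r + mr * mr = 1)
    (hK : star K = K) (hmK : star mK = mK) (hKm : K * K + mK * mK = 1)
    (hbK : b * K = (ε : ℂ) • (1 - r)) (hrf : r * f = 0)
    (hclose : qf τ (u * b - b) < (ε ^ 2) ^ 2) :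
    ∃ v : A, star v * v = 1 ∧ v * star v = 1 ∧ qf τ (v - 1) < (4 * ε) ^ 2 ∧ v * f = u * f := by
  set p := 1 - r with hp
  have hps : star p = p := by simp [hp, hr]
  have h1 : qf τ ((u - 1) * p) < ε ^ 2 := by
    have a1 : (u - 1) * b * K = (ε : ℂ) • ((u - 1) * p) := by
      rw [mul_assoc, hbK, mul_smul_comm]
    have a2 := qf_mul_right hpos htr hK hmK hKm ((u - 1) * b)
    rw [a1, qf_smul] at a2
    have a3 : (u - 1) * b = u * b - b := by noncomm_ring
    rw [a3] at a2
    have : ε ^ 2 * qf τ ((u - 1) * p) < ε ^ 2 * ε ^ 2 := by nlinarith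
    exact lt_of_mul_lt_mul_left this (by positivity)
  have h2 : qf τ (p * (star u - 1)) = qf τ ((u - 1) * p) := by
    rw [← qf_star htr]; simp [hps]
  have h3 : qf τ ((star u - 1) * p) = qf τ ((u - 1) * p) := by
    rw [← qf_unitary_left hu, ← qf_neg]
    congr 1
    have : u * ((star u - 1) * p) = (u * star u - u) * p := by noncomm_ring
    rw [this, hu']; noncomm_ring
  have h4 : qf τ (r * (star u - 1) * p) ≤ qf τ ((u - 1) * p) := by
    rw [← h3, ← qf_star htr, ← qf_star htr ((star u - 1) * p)]
    have : star (r * (star u - 1) * p) = star ((star u - 1) * p) * r := by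
      simp only [star_mul, hr]; noncomm_ring
    rw [this]
    exact qf_mul_right hpos htr hr hmr hrm _
  obtain ⟨w, s, hw, hw', hs, hz, hzz⟩ := hpolar (1 + r * (star u - 1) * r)
  set z := 1 + r * (star u - 1) * r with hzdef
  have h5 : qf τ (star u - z) ≤ 4 * qf τ ((u - 1) * p) := by
    have : star u - z = p * (star u - 1) + r * (star u - 1) * p := by
      rw [hzdef, hp]; noncomm_ring
    rw [this]
    have := qf_add hpos (p * (star u - 1)) (r * (star u - 1) * p)
    linarith
  have h6 : qf τ (w - z) ≤ qf τ (star u - z) := by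
    rw [← hz]
    exact qf_best hpos htr hw (by rw [star_star, hu']) hw' (by rw [star_star, hu]) hs
  have h7 : qf τ (u * w - 1) < (4 * ε) ^ 2 := by
    have a1 : u * w - 1 = u * (w - star u) := by rw [mul_sub, hu']
    have a2 : w - star u = (w - z) + -(star u - z) := by abel
    rw [a1, qf_unitary_left hu, a2]
    have := qf_add hpos (w - z) (-(star u - z))
    rw [qf_neg] at this
    nlinarith
  have hfr : star f * r = 0 := by
    have := congrArg star hrf
    simpa [hr] using this
  have hzf : z * f = f := by
    rw [hzdef, add_mul, mul_assoc _ r f, hrf]; simp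
  have hzf' : star z * f = f := by
    have : star z = 1 + r * (star (star u - 1) * r) := by
      rw [hzdef]; simp [hr, mul_assoc]
    rw [this, add_mul, mul_assoc, mul_assoc, hrf]; simp
  have h8 : s * s * f = f := by
    set g := s * s * f - f with hg
    have g1 : s * s * g + g = 0 := by
      have : s * s * g + g = s * s * (s * s) * f - f := by rw [hg]; noncomm_ring
      rw [this, hzz, mul_assoc, hzf, hzf', sub_self]
    have g2 : star g * g = -(star (s * g) * (s * g)) := by
      rw [star_mul, hs, eq_neg_iff_add_eq_zero]
      calc _ = star g * (s * s * g + g) := by noncomm_ring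
        _ = 0 := by rw [g1, mul_zero]
    have g3 : τ (star g * g) = 0 := by
      refine le_antisymm ?_ (hpos g)
      rw [g2, map_neg]
      exact neg_nonpos.2 (hpos _)
    exact sub_eq_zero.1 (hf g g3)
  have h9 : w * f = f := by
    calc w * f = w * (s * s * f) := by rw [h8]
      _ = w * (s * s) * f := by noncomm_ring
      _ = f := by rw [hz, hzf]
  refine ⟨u * w, ?_, ?_, h7, ?_⟩
  · calc star (u * w) * (u * w) = star w * (star u * u) * w := by rw [star_mul]; noncomm_ring
      _ = 1 := by rw [hu, mul_one, hw]
  · calc u * w * star (u * w) = u * (w * star w) * star u := by rw [star_mul]; noncomm_ring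
      _ = 1 := by rw [hw', mul_one, hu']
  · rw [mul_assoc, h9]

end Alg

lemma polar_sq (M : VonNeumannAlgebra H) (τ : M.toStarSubalgebra →ₗ[ℂ] ℂ)
    (hτf : ∀ x : M.toStarSubalgebra, τ (star x * x) = 0 → x = 0)
    (hτtr : ∀ x y : M.toStarSubalgebra, τ (x * y) = τ (y * x)) (y : M.toStarSubalgebra) :
    ∃ w s : M.toStarSubalgebra, star w * w = 1 ∧ w * star w = 1 ∧ star s = s ∧
      w * (s * s) = y ∧ s * s * (s * s) = star y * y := by
  have h0 : 0 ≤ star (y : H →L[ℂ] H) * y := star_mul_self_nonneg _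
  have hyM : star (y : H →L[ℂ] H) * y ∈ M := (star y * y).2
  let s0 : H →L[ℂ] H := cfc (fun t : ℝ => Real.sqrt (Real.sqrt t)) (star (y : H →L[ℂ] H) * y)
  have hs0 : IsSelfAdjoint s0 := cfc_predicate _ _
  have h4 : s0 * s0 * (s0 * s0) = star (y : H →L[ℂ] H) * y := by
    have hc : ContinuousOn (fun t : ℝ => Real.sqrt (Real.sqrt t))
      (spectrum ℝ (star (y : H →L[ℂ] H) * y)) := by fun_prop
    simp only [s0]
    rw [← cfc_mul _ _ _ hc hc, ← cfc_mul _ _ _ (by fun_prop) (by fun_prop)]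
    conv_rhs => rw [← cfc_id' ℝ (star (y : H →L[ℂ] H) * y) h0.isSelfAdjoint]
    refine cfc_congr fun t ht => ?_
    have : 0 ≤ t := spectrum_nonneg_of_nonneg h0 ht
    rw [Real.mul_self_sqrt (Real.sqrt_nonneg _), Real.mul_self_sqrt this]
  let s : M.toStarSubalgebra := ⟨s0, cfc_mem_vn M hyM _⟩
  have hs : star s = s := Subtype.ext hs0.star_eq
  have hss : s * s * (s * s) = star y * y := Subtype.ext h4
  obtain ⟨w, w1, w2, w3⟩ := unitary_polar M τ hτf hτtr (s * s) y (by
    have : 0 ≤ star s0 * s0 := star_mul_self_nonneg _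
    rw [hs0.star_eq] at this
    exact this) hss
  exact ⟨w, s, w1, w2, hs, w3, hss⟩

end PolarForm

set_option maxHeartbeats 1000000 in
theorem vonNeumann_controlled_unitary_polar_form
    {H : Type*} [NormedAddCommGroup H] [InnerProductSpace ℂ H] [CompleteSpace H]
    (M : VonNeumannAlgebra H)
    (τ : M.toStarSubalgebra →ₗ[ℂ] ℂ)
    (hτ1 : τ 1 = 1)
    (hτpos : ∀ x : M.toStarSubalgebra, 0 ≤ τ (star x * x))
    (hτfaithful : ∀ x : M.toStarSubalgebra, τ (star x * x) = 0 → x = 0)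
    (hτtr : ∀ x y : M.toStarSubalgebra, τ (x * y) = τ (y * x))
    (ε : ℝ) (hε : 0 < ε)
    (a : M.toStarSubalgebra)
    -- `|a| = (a*a)^{1/2}` belongs to `M` (automatic, as `M` is closed under the
    -- continuous functional calculus)
    (habs : cfc Real.sqrt (star (a : H →L[ℂ] H) * (a : H →L[ℂ] H)) ∈ M.toStarSubalgebra)
    (hclose : norm2 τ (a - ⟨_, habs⟩) < ε ^ 2) :
    ∃ u : M.toStarSubalgebra, star u * u = 1 ∧ u * star u = 1 ∧
      norm2 τ (u - 1) < 4 * ε ∧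
      (a : H →L[ℂ] H) *
          cfc (fun t : ℝ => max (t - ε) 0 / t)
            (cfc Real.sqrt (star (a : H →L[ℂ] H) * (a : H →L[ℂ] H))) =
        (u : H →L[ℂ] H) *
          cfc (fun t : ℝ => max (t - ε) 0)
            (cfc Real.sqrt (star (a : H →L[ℂ] H) * (a : H →L[ℂ] H))) := by
  have h0 : 0 ≤ star (a : H →L[ℂ] H) * a := star_mul_self_nonneg _
  have hb : 0 ≤ cfc Real.sqrt (star (a : H →L[ℂ] H) * (a : H →L[ℂ] H)) :=
    cfc_nonneg fun t _ => Real.sqrt_nonneg t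
  have hbb : cfc Real.sqrt (star (a : H →L[ℂ] H) * (a : H →L[ℂ] H)) *
      cfc Real.sqrt (star (a : H →L[ℂ] H) * (a : H →L[ℂ] H)) = star (a : H →L[ℂ] H) * a := by
    rw [← cfc_mul _ _ _ (by fun_prop) (by fun_prop)]
    conv_rhs => rw [← cfc_id' ℝ (star (a : H →L[ℂ] H) * a) h0.isSelfAdjoint]
    refine cfc_congr fun t ht => ?_
    exact Real.mul_self_sqrt (spectrum_nonneg_of_nonneg h0 ht)
  generalize cfc Real.sqrt (star (a : H →L[ℂ] H) * (a : H →L[ℂ] H)) = b at *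
  have hsa : IsSelfAdjoint b := hb.isSelfAdjoint
  have hsp : ∀ t ∈ spectrum ℝ b, 0 ≤ t := fun t ht => spectrum_nonneg_of_nonneg hb ht
  obtain ⟨u, hu, hu', hub⟩ := unitary_polar M τ hτfaithful hτtr ⟨b, habs⟩ a hb
    (Subtype.ext hbb)
  have hub' : (u : H →L[ℂ] H) * b = a := congrArg Subtype.val hub
  have hmax : ∀ t : ℝ, 0 < max t ε := fun t => lt_max_of_lt_right hε
  have hmax' : ∀ t : ℝ, max t ε ≠ 0 := fun t => (hmax t).ne'
  let el : (ℝ → ℝ) → M.toStarSubalgebra := fun f => ⟨cfc f b, cfc_mem_vn M habs f⟩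
  have hel : ∀ f, star (el f) = el f := fun f =>
    Subtype.ext (IsSelfAdjoint.star_eq (cfc_predicate f b))
  have hmul : ∀ f g : ℝ → ℝ, Continuous f → Continuous g →
      el f * el g = el (fun t => f t * g t) := fun f g hf hg =>
    Subtype.ext (cfc_mul f g b hf.continuousOn hg.continuousOn).symm
  have hcongr : ∀ f g : ℝ → ℝ, (∀ t, 0 ≤ t → f t = g t) → el f = el g := fun f g h =>
    Subtype.ext (cfc_congr fun t ht => h t (hsp t ht))
  have hone : el (fun _ => 1) = 1 := Subtype.ext (cfc_const_one ℝ b)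
  have hid : el (fun t => t) = ⟨b, habs⟩ := Subtype.ext (cfc_id' ℝ b)
  have hsq : ∀ f : ℝ → ℝ, Continuous f → (∀ t, 0 ≤ t → f t ^ 2 ≤ 1) →
      el f * el f + el (fun t => Real.sqrt (1 - f t ^ 2)) *
        el (fun t => Real.sqrt (1 - f t ^ 2)) = 1 := by
    intro f hf h
    rw [hmul f f hf hf, hmul _ _ (by fun_prop) (by fun_prop), ← hone]
    refine Subtype.ext ?_
    change cfc _ b + cfc _ b = cfc _ b
    rw [← cfc_add _ _ _ (by fun_prop) (by fun_prop)]
    refine cfc_congr fun t ht => ?_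
    have h1 := h t (hsp t ht)
    rw [Real.mul_self_sqrt (by linarith)]
    ring
  -- the cut-off functions
  let rf : ℝ → ℝ := fun t => 1 - t ^ 2 / max t ε ^ 2
  let kf : ℝ → ℝ := fun t => ε * t / max t ε ^ 2
  have hrc : Continuous rf := by
    have : Continuous fun t : ℝ => t ^ 2 / max t ε ^ 2 :=
      Continuous.div (by fun_prop) (by fun_prop) fun t => pow_ne_zero _ (hmax' t)
    exact continuous_const.sub this
  have hkc : Continuous kf :=
    Continuous.div (by fun_prop) (by fun_prop) fun t => pow_ne_zero _ (hmax' t)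
  have hr1 : ∀ t, 0 ≤ t → rf t ^ 2 ≤ 1 := by
    intro t ht
    have h1 : t ^ 2 / max t ε ^ 2 ≤ 1 := by
      rw [div_le_one (pow_pos (hmax t) 2)]
      exact pow_le_pow_left₀ ht (le_max_left _ _) 2
    have h2 : 0 ≤ t ^ 2 / max t ε ^ 2 := by positivity
    simp only [rf]
    nlinarith
  have hk1 : ∀ t, 0 ≤ t → kf t ^ 2 ≤ 1 := by
    intro t ht
    have h1 : kf t ≤ 1 := by
      simp only [kf]
      rw [div_le_one (pow_pos (hmax t) 2), sq]
      exact mul_le_mul (le_max_right _ _) (le_max_left _ _) ht (hmax t).le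
    have h2 : 0 ≤ kf t := by simp only [kf]; positivity
    nlinarith
  have hbK : (⟨b, habs⟩ : M.toStarSubalgebra) * el kf = (ε : ℂ) • (1 - el rf) := by
    rw [← hid, hmul _ _ (by fun_prop) hkc, ← hone]
    refine Subtype.ext ?_
    change cfc _ b = (ε : ℂ) • (cfc _ b - cfc _ b)
    rw [← cfc_sub _ _ _ (by fun_prop) hrc.continuousOn, Complex.coe_smul,
      ← cfc_smul ε _ b (by fun_prop)]
    refine cfc_congr fun t ht => ?_
    simp only [kf, rf, smul_eq_mul]
    ring
  have hrf : el rf * el (fun t => max (t - ε) 0) = 0 := by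
    rw [hmul _ _ hrc (by fun_prop), hcongr _ (fun _ => 0)]
    · exact Subtype.ext (cfc_const_zero ℝ b)
    · intro t ht
      simp only [rf]
      rcases le_total t ε with h | h
      · rw [max_eq_right (by linarith : t - ε ≤ 0), mul_zero]
      · rw [max_eq_left h, div_self (pow_ne_zero 2 (by linarith)), sub_self, zero_mul]
  have hclose' : qf τ (u * ⟨b, habs⟩ - ⟨b, habs⟩) < (ε ^ 2) ^ 2 := by
    rw [hub]
    exact (Real.sqrt_lt' (by positivity)).1 hclose
  obtain ⟨v, hv, hv', hv1, hvf⟩ := alg_main τ hτpos hτfaithful hτtr ε hε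
    (polar_sq M τ hτfaithful hτtr) u ⟨b, habs⟩ (el fun t => max (t - ε) 0) (el rf) _ (el kf) _
    hu hu' (hel _) (hel _) (hsq rf hrc hr1) (hel _) (hel _) (hsq kf hkc hk1) hbK hrf hclose'
  refine ⟨v, hv, hv', (Real.sqrt_lt' (by positivity)).2 hv1, ?_⟩
  have hvf' : (v : H →L[ℂ] H) * cfc (fun t : ℝ => max (t - ε) 0) b =
      (u : H →L[ℂ] H) * cfc (fun t : ℝ => max (t - ε) 0) b := congrArg Subtype.val hvf
  rw [hvf', ← hub', mul_assoc]
  congr 1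
  have hg : Continuous fun t : ℝ => max (t - ε) 0 / t := by
    have : (fun t : ℝ => max (t - ε) 0 / t) = fun t => max (t - ε) 0 / max t ε := by
      funext t
      rcases le_total t ε with h | h
      · rw [max_eq_right (by linarith : t - ε ≤ 0), zero_div, zero_div]
      · rw [max_eq_left h]
    rw [this]
    exact Continuous.div (by fun_prop) (by fun_prop) hmax'
  have := congrArg Subtype.val (hmul (fun t => t) _ continuous_id hg)
  rw [hid] at this
  refine Eq.trans this ?_
  refine cfc_congr fun t ht => ?_
  rcases eq_or_lt_of_le (hsp t ht) with h | h
  · simp [← h, hε.le]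
  · field_simp
end
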